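/- Let G be a finite simple graph on 9 vertices with minimum degree at least 3, with degree sum equal to 42 (= 6·9 − 12), and which is K_{3,3}-free. Then G has an edge of density at most 20, i.e. there are adjacent vertices u, v with deg(u)·deg(v) ≤ 20. -/

import Mathlib

/-- A graph contains K33 if there are six pairwise distinct vertices
a1, a2, a3, b1, b2, b3 with each ai adjacent to each bj; otherwise it is K33-free. -/
def HasK33 {V : Type*} (G : SimpleGraph V) : Prop :=
  ∃ a₁ a₂ a₃ b₁ b₂ b₃ : V, ([a₁, a₂, a₃, b₁, b₂, b₃] : List V).Nodup ∧
    ∀ a ∈ ({a₁, a₂, a₃} : Set V), ∀ b ∈ ({b₁, b₂, b₃} : Set V), G.Adj a b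

/-!
Suppose every edge of a graph on `n ≤ 9` vertices has density more than 20. Degrees are at most 8,
so a non-isolated vertex has degree at least 3. The neighbours of a vertex of degree 3 have degree
at least 7, so each of the three misses at most `n - 7` vertices; this leaves at least
`n - 3 (n - 7) ≥ 3` common neighbours, and hence a `K₃,₃`. Once all degrees are at least 4, the
neighbours of a vertex of degree 4 have degree at least 6, which forces the degree sum up to
`4 · 6 + (n - 4) · 4 > 6 n - 12`. Finally, if all degrees are at least 5, then the degree sum is at
least `5 n > 6 n - 12`.
-/

theorem card_le_card_inf_add_sum_card_compl {ι α : Type*} [Fintype α] [DecidableEq α]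
    (s : Finset ι) (f : ι → Finset α) :
    Fintype.card α ≤ (s.inf f).card + ∑ i ∈ s, (f i)ᶜ.card := by
  have hcompl : (s.inf f)ᶜ = s.biUnion fun i ↦ (f i)ᶜ := by
    ext a
    simp
  calc
    Fintype.card α = (s.inf f).card + (s.inf f)ᶜ.card := (Finset.card_add_card_compl _).symm
    _ ≤ (s.inf f).card + ∑ i ∈ s, (f i)ᶜ.card := by
      rw [hcompl]
      gcongr
      exact Finset.card_biUnion_le

section

variable {V : Type*} {G : SimpleGraph V}

theorem HasK33.of_isCompleteBetween {s t : Finset V} (hs : 3 ≤ s.card) (ht : 3 ≤ t.card)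
    (h : G.IsCompleteBetween s t) : HasK33 G := by
  classical
  obtain ⟨s', hs's, hs'⟩ := Finset.exists_subset_card_eq hs
  obtain ⟨t', ht't, ht'⟩ := Finset.exists_subset_card_eq ht
  obtain ⟨a₁, a₂, a₃, ha₁₂, ha₁₃, ha₂₃, rfl⟩ := Finset.card_eq_three.mp hs'
  obtain ⟨b₁, b₂, b₃, hb₁₂, hb₁₃, hb₂₃, rfl⟩ := Finset.card_eq_three.mp ht'
  have hadj : ∀ a ∈ ({a₁, a₂, a₃} : Set V), ∀ b ∈ ({b₁, b₂, b₃} : Set V), G.Adj a b :=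
    fun a ha b hb ↦ h (hs's (by simpa using ha)) (ht't (by simpa using hb))
  have hne : ∀ a ∈ ({a₁, a₂, a₃} : Set V), ∀ b ∈ ({b₁, b₂, b₃} : Set V), a ≠ b :=
    fun a ha b hb ↦ (hadj a ha b hb).ne
  refine ⟨a₁, a₂, a₃, b₁, b₂, b₃, ?_, hadj⟩
  simp_all

variable [Fintype V] [DecidableRel G.Adj]

theorem HasK33.of_le_sum_degree {s : Finset V} (hs : s.card = 3)
    (hdeg : 2 * Fintype.card V + 3 ≤ ∑ u ∈ s, G.degree u) : HasK33 G := by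
  classical
  have hmiss : ∑ u ∈ s, (G.neighborFinset u)ᶜ.card + ∑ u ∈ s, G.degree u = 3 * Fintype.card V := by
    simp only [← G.card_neighborFinset_eq_degree, ← Finset.sum_add_distrib,
      Finset.card_compl_add_card, Finset.sum_const, hs, smul_eq_mul]
  have hcommon : 3 ≤ (s.inf fun u ↦ G.neighborFinset u).card := by
    have := card_le_card_inf_add_sum_card_compl s fun u ↦ G.neighborFinset u
    lia
  refine .of_isCompleteBetween hs.ge hcommon fun u hu w hw ↦ ?_
  exact (G.mem_neighborFinset u w).mp (Finset.mem_inf.mp hw u hu)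

theorem degree_mul_add_mul_le_sum_degree {v : V} {k d : ℕ} (hnbr : ∀ u, G.Adj v u → k ≤ G.degree u)
    (hmin : ∀ u, d ≤ G.degree u) :
    G.degree v * k + (Fintype.card V - G.degree v) * d ≤ ∑ u, G.degree u := by
  classical
  calc
    _ = (G.neighborFinset v).card * k + (G.neighborFinset v)ᶜ.card * d := by
      rw [Finset.card_compl, G.card_neighborFinset_eq_degree]
    _ ≤ ∑ u ∈ G.neighborFinset v, G.degree u + ∑ u ∈ (G.neighborFinset v)ᶜ, G.degree u :=
      add_le_add
        (Finset.card_nsmul_le_sum _ _ _ fun u hu ↦ hnbr u ((G.mem_neighborFinset v u).mp hu))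
        (Finset.card_nsmul_le_sum _ _ _ fun u _ ↦ hmin u)
    _ = ∑ u, G.degree u := Finset.sum_add_sum_compl _ _

variable {v : V}

theorem three_le_degree_of_density_gt (hcard : Fintype.card V ≤ 9) (hpos : 0 < G.degree v)
    (hdense : ∀ u, G.Adj v u → 20 < G.degree v * G.degree u) : 3 ≤ G.degree v := by
  obtain ⟨u, hvu⟩ := (G.degree_pos_iff_exists_adj v).mp hpos
  have hu : G.degree u ≤ 8 := by
    have := G.degree_lt_card_verts u
    lia
  have := hdense u hvu
  by_contra! hv
  nlinarith

theorem four_le_degree_of_density_gt (hcard : Fintype.card V ≤ 9) (hpos : 0 < G.degree v)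
    (hdense : ∀ u, G.Adj v u → 20 < G.degree v * G.degree u) (hK33 : ¬ HasK33 G) :
    4 ≤ G.degree v := by
  refine (three_le_degree_of_density_gt hcard hpos hdense).lt_of_ne' fun hv ↦ hK33 ?_
  have hnbr : ∀ u ∈ G.neighborFinset v, 7 ≤ G.degree u := fun u hu ↦ by
    have := hdense u ((G.mem_neighborFinset v u).mp hu)
    rw [hv] at this
    lia
  have hN : (G.neighborFinset v).card = 3 := (G.card_neighborFinset_eq_degree v).trans hv
  refine .of_le_sum_degree hN ?_
  calc
    2 * Fintype.card V + 3 ≤ 3 * 7 := by lia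
    _ ≤ ∑ u ∈ G.neighborFinset v, G.degree u := by
      simpa only [hN, smul_eq_mul] using Finset.card_nsmul_le_sum _ _ _ hnbr

theorem five_le_degree_of_density_gt (hcard : Fintype.card V ≤ 9)
    (hsum : (∑ u, G.degree u) + 12 ≤ 6 * Fintype.card V) (hmin : ∀ u, 4 ≤ G.degree u)
    (hdense : ∀ u, G.Adj v u → 20 < G.degree v * G.degree u) : 5 ≤ G.degree v := by
  refine (hmin v).lt_of_ne' fun hv ↦ ?_
  have hnbr : ∀ u, G.Adj v u → 6 ≤ G.degree u := fun u hu ↦ by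
    have := hdense u hu
    rw [hv] at this
    lia
  have := degree_mul_add_mul_le_sum_degree hnbr hmin
  rw [hv] at this
  lia

end

theorem stmt_8_general {V : Type*} [Fintype V] (G : SimpleGraph V) [DecidableRel G.Adj]
    (hcard : Fintype.card V ≤ 9)
    (hpos : ∀ v : V, 0 < G.degree v)
    (hsum : (∑ v : V, G.degree v) + 12 ≤ 6 * Fintype.card V)
    (hK33 : ¬ HasK33 G) :
    ∃ u v : V, G.Adj u v ∧ G.degree u * G.degree v ≤ 20 := by
  by_contra! hdense
  have hfour (v : V) : 4 ≤ G.degree v :=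
    four_le_degree_of_density_gt hcard (hpos v) (hdense v) hK33
  have hfive (v : V) : 5 ≤ G.degree v :=
    five_le_degree_of_density_gt hcard hsum hfour (hdense v)
  have hlower : Fintype.card V * 5 ≤ ∑ v : V, G.degree v :=
    Finset.card_nsmul_le_sum _ _ _ fun v _ ↦ hfive v
  lia

/-- Every finite simple K33-free graph on 9 vertices with minimum degree at
least 3 and degree sum 42 has an edge of density at most 20. -/
theorem stmt_8 {V : Type*} [Fintype V] [DecidableEq V]
    (G : SimpleGraph V) [DecidableRel G.Adj]
    (hcard : Fintype.card V = 9)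
    (hmin : ∀ v : V, 3 ≤ G.degree v)
    (hsum : ∑ v : V, G.degree v = 42)
    (hK33 : ¬ HasK33 G) :
    ∃ u v : V, G.Adj u v ∧ G.degree u * G.degree v ≤ 20 :=
  stmt_8_general G hcard.le (fun v ↦ three_pos.trans_le (hmin v)) (by rw [hsum, hcard]) hK33
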